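/- arXiv:2504.12478 — 2 statements merged into one kernel-verified Lean document; each statement's English description precedes it below -/
import Mathlib

section
/- Let X and Y be centered Gaussian random vectors in R^k with covariance matrices Σ^X and Σ^Y respectively, i.e. X ~ N(0, Σ^X) and Y ~ N(0, Σ^Y). Assume that for all 1 ≤ i, j ≤ k one has 2|Σ^X_{ij} − Σ^Y_{ij}| ≤ (Σ^Y_{ii} − Σ^X_{ii}) + (Σ^Y_{jj} − Σ^X_{jj}). Then for every real m ≥ 1, E[(max_{1≤i≤k} |X_i|)^m] ≤ E[(max_{1≤i≤k} |Y_i|)^m]. -/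
open MeasureTheory ProbabilityTheory Real
open scoped NNReal BigOperators

/-- A random vector `X` on `(Ω, P)` is a centered Gaussian random vector if every
linear combination of its coordinates is a centered real Gaussian random variable. -/
def IsCenteredGaussianVec {Ω : Type*} [MeasurableSpace Ω] {k : ℕ}
    (P : Measure Ω) (X : Ω → Fin k → ℝ) : Prop :=
  ∀ a : Fin k → ℝ,
    Measure.map (fun ω => ∑ i, a i * X ω i) P
      = gaussianReal 0 (variance (fun ω => ∑ i, a i * X ω i) P).toNNReal

noncomputable def lseS {k : ℕ} (K : ℝ) (x : Fin k → ℝ) : ℝ := K + ∑ i, cosh (x i)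

noncomputable def lseF {k : ℕ} (K : ℝ) (x : Fin k → ℝ) : ℝ := log (lseS K x)

lemma abs_sinh_le_cosh' (x : ℝ) : |sinh x| ≤ cosh x := by
  rw [abs_le]
  constructor
  · rw [sinh_eq, cosh_eq]; nlinarith [exp_pos x, exp_pos (-x)]
  · exact (sinh_lt_cosh x).le

lemma lseS_pos {k : ℕ} {K : ℝ} (hK : 0 < K) (x : Fin k → ℝ) : 0 < lseS K x := by
  unfold lseS
  have : 0 ≤ ∑ i, cosh (x i) := Finset.sum_nonneg fun i _ => (cosh_pos _).le
  linarith

lemma lse_deriv_bounds {k : ℕ} {K : ℝ} (hK : 0 < K) (w v : Fin k → ℝ) :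
    |∑ i, v i * sinh (w i)| ≤ ‖v‖ * lseS K w ∧
    |∑ i, v i ^ 2 * cosh (w i)| ≤ ‖v‖ ^ 2 * lseS K w ∧
    |∑ i, v i ^ 3 * sinh (w i)| ≤ ‖v‖ ^ 3 * lseS K w := by
  have key : ∀ (n : ℕ) (g : ℝ → ℝ), (∀ x, |g x| ≤ cosh x) →
      |∑ i, v i ^ n * g (w i)| ≤ ‖v‖ ^ n * lseS K w := by
    intro n g hg
    calc |∑ i, v i ^ n * g (w i)| ≤ ∑ i, |v i ^ n * g (w i)| := Finset.abs_sum_le_sum_abs _ _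
      _ ≤ ∑ i, ‖v‖ ^ n * cosh (w i) := by
          refine Finset.sum_le_sum fun i _ => ?_
          rw [abs_mul, abs_pow]
          have := norm_le_pi_norm v i
          rw [Real.norm_eq_abs] at this
          have h2 := hg (w i)
          gcongr
      _ = ‖v‖ ^ n * ∑ i, cosh (w i) := by rw [Finset.mul_sum]
      _ ≤ ‖v‖ ^ n * lseS K w := by
          unfold lseS
          gcongr
          linarith
  refine ⟨?_, key 2 cosh fun x => (abs_of_pos (cosh_pos x)).le, key 3 sinh abs_sinh_le_cosh'⟩
  simpa using key 1 sinh abs_sinh_le_cosh'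

lemma lse_mvt {f f' : ℝ → ℝ} {C : ℝ} (hf : ∀ t, HasDerivAt f (f' t) t)
    (hb : ∀ t ∈ Set.Icc (0:ℝ) 1, |f' t| ≤ C) :
    ∀ t ∈ Set.Icc (0:ℝ) 1, |f t - f 0| ≤ C := by
  intro t ht
  have h := norm_image_sub_le_of_norm_deriv_le_segment' (f := f) (f' := f') (a := 0) (b := 1)
    (C := C) (fun x _ => (hf x).hasDerivWithinAt)
    (fun x hx => hb x (Set.Ico_subset_Icc_self hx)) t ht
  have hC : 0 ≤ C := (abs_nonneg _).trans (hb 0 (by simp))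
  rw [Real.norm_eq_abs] at h
  nlinarith [ht.1, ht.2]

noncomputable def lseA {k : ℕ} (K : ℝ) (w v : Fin k → ℝ) : ℝ :=
  (∑ i, v i * sinh (w i)) / lseS K w

noncomputable def lseB {k : ℕ} (K : ℝ) (w v : Fin k → ℝ) : ℝ :=
  (∑ i, v i ^ 2 * cosh (w i)) / lseS K w - ((∑ i, v i * sinh (w i)) / lseS K w) ^ 2

lemma lse_hasDeriv {k : ℕ} {K : ℝ} (hK : 0 < K) (w v : Fin k → ℝ) (t : ℝ) :
    HasDerivAt (fun t : ℝ => lseF K (w + t • v)) (lseA K (w + t • v) v) t ∧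
    HasDerivAt (fun t : ℝ => lseA K (w + t • v) v) (lseB K (w + t • v) v) t ∧
    ∃ c, |c| ≤ 6 * ‖v‖ ^ 3 ∧ HasDerivAt (fun t : ℝ => lseB K (w + t • v) v) c t := by
  have hl : ∀ i, HasDerivAt (fun t : ℝ => (w + t • v) i) (v i) t := by
    intro i
    simpa using ((hasDerivAt_id t).mul_const (v i)).const_add (w i)
  have hS : HasDerivAt (fun t : ℝ => lseS K (w + t • v)) (∑ i, v i * sinh ((w + t • v) i)) t := by
    unfold lseS
    refine HasDerivAt.const_add K (HasDerivAt.fun_sum fun i _ => ?_)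
    simpa [mul_comm] using (hl i).cosh
  have h1 : HasDerivAt (fun t : ℝ => ∑ i, v i * sinh ((w + t • v) i))
      (∑ i, v i ^ 2 * cosh ((w + t • v) i)) t := by
    refine HasDerivAt.fun_sum fun i _ => ?_
    have := ((hl i).sinh).const_mul (v i)
    exact this.congr_deriv (by ring)
  have h2 : HasDerivAt (fun t : ℝ => ∑ i, v i ^ 2 * cosh ((w + t • v) i))
      (∑ i, v i ^ 3 * sinh ((w + t • v) i)) t := by
    refine HasDerivAt.fun_sum fun i _ => ?_
    have := ((hl i).cosh).const_mul (v i ^ 2)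
    exact this.congr_deriv (by ring)
  have hp := lseS_pos hK (w + t • v)
  obtain ⟨b1, b2, b3⟩ := lse_deriv_bounds hK (w + t • v) v
  have d1 := h1.div hS hp.ne'
  have d2 := (h2.div hS hp.ne').sub (d1.pow 2)
  refine ⟨hS.log hp.ne', ?_, _, ?_, d2⟩
  · refine d1.congr_deriv ?_
    unfold lseB
    field_simp
  · set S := lseS K (w + t • v)
    set S1 := ∑ i, v i * sinh ((w + t • v) i)
    set S2 := ∑ i, v i ^ 2 * cosh ((w + t • v) i)
    set S3 := ∑ i, v i ^ 3 * sinh ((w + t • v) i)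
    have a1 : |S1 / S| ≤ ‖v‖ := by rwa [abs_div, abs_of_pos hp, div_le_iff₀ hp]
    have a2 : |S2 / S| ≤ ‖v‖ ^ 2 := by rwa [abs_div, abs_of_pos hp, div_le_iff₀ hp]
    have a3 : |S3 / S| ≤ ‖v‖ ^ 3 := by rwa [abs_div, abs_of_pos hp, div_le_iff₀ hp]
    have e : (S3 * S - S2 * S1) / S ^ 2 - ((2:ℕ):ℝ) * (S1 / S) ^ (2-1) * ((S2 * S - S1 * S1) / S ^ 2)
        = S3 / S - 3 * ((S1 / S) * (S2 / S)) + 2 * (S1 / S) ^ 3 := by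
      norm_num
      field_simp
      ring
    have a12 : |(S1 / S) * (S2 / S)| ≤ ‖v‖ ^ 3 := by
      rw [abs_mul]
      calc _ ≤ ‖v‖ * ‖v‖ ^ 2 := by gcongr
        _ = _ := by ring
    have a13 : |(S1 / S) ^ 3| ≤ ‖v‖ ^ 3 := by rw [abs_pow]; gcongr
    have e' : |S3 / S - 3 * ((S1 / S) * (S2 / S)) + 2 * (S1 / S) ^ 3| ≤ 6 * ‖v‖ ^ 3 := by
      rw [abs_le] at *
      constructor <;> linarith [a3.1, a3.2, a12.1, a12.2, a13.1, a13.2]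
    rw [← e] at e'
    exact e'

lemma lseF_taylor {k : ℕ} {K : ℝ} (hK : 0 < K) (w v : Fin k → ℝ) :
    |lseF K (w + v) - lseF K w - lseA K w v - lseB K w v / 2| ≤ 6 * ‖v‖ ^ 3 := by
  have hd := lse_hasDeriv hK w v
  choose hd1 hd2 c hc hd3 using hd
  have s1 := lse_mvt hd3 (fun t _ => hc t)
  have hlin : ∀ (b t : ℝ), HasDerivAt (fun t : ℝ => t * b) b t := fun b t => by
    simpa using (hasDerivAt_id t).mul_const b
  have hq : ∀ (b t : ℝ), HasDerivAt (fun t : ℝ => t ^ 2 * (b / 2)) (t * b) t := fun b t => by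
    have := (hasDerivAt_pow 2 t).mul_const (b / 2)
    exact this.congr_deriv (by push_cast; ring)
  have s2 := lse_mvt (f := fun t : ℝ => lseA K (w + t • v) v - t * lseB K w v)
    (fun t => (hd2 t).sub (hlin _ t)) (C := 6 * ‖v‖ ^ 3) (fun t ht => by simpa using s1 t ht)
  have s3 := lse_mvt (f := fun t : ℝ => lseF K (w + t • v) - t * lseA K w v
      - t ^ 2 * (lseB K w v / 2))
    (fun t => ((hd1 t).sub (hlin _ t)).sub (hq _ t)) (C := 6 * ‖v‖ ^ 3) (fun t ht => by
      have := s2 t ht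
      simp only [zero_smul, add_zero, zero_mul, sub_zero] at this
      convert this using 2
      ring) 1 (by simp)
  simp only [one_smul, one_mul, one_pow, zero_smul, add_zero, zero_mul, sub_zero] at s3
  convert s3 using 2
  ring

lemma lseF_lip {k : ℕ} {K : ℝ} (hK : 0 < K) : LipschitzWith 1 (lseF (k := k) K) := by
  refine LipschitzWith.of_dist_le_mul fun x y => ?_
  have h := lse_mvt (fun t => (lse_hasDeriv hK y (x - y) t).1) (C := ‖x - y‖) (fun t _ => by
    have hp := lseS_pos hK (y + t • (x - y))
    unfold lseA
    rw [abs_div, abs_of_pos hp, div_le_iff₀ hp]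
    exact (lse_deriv_bounds hK _ _).1) 1 (by simp)
  simpa [dist_eq_norm] using h

lemma lse_diag {k : ℕ} {K : ℝ} (hK : 0 < K) (w : Fin k → ℝ) (SX SY : Fin k → Fin k → ℝ)
    (hcond : ∀ i j, 2 * |SX i j - SY i j| ≤ SY i i - SX i i + (SY j j - SX j j)) :
    (∑ i, SX i i * cosh (w i)) / lseS K w
        - (∑ i, ∑ j, SX i j * (sinh (w i) * sinh (w j))) / lseS K w ^ 2
      ≤ (∑ i, SY i i * cosh (w i)) / lseS K w
        - (∑ i, ∑ j, SY i j * (sinh (w i) * sinh (w j))) / lseS K w ^ 2 := by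
  have hp := lseS_pos hK w
  have hD : ∀ i, 0 ≤ SY i i - SX i i := fun i => by
    have := hcond i i
    have := abs_nonneg (SX i i - SY i i)
    linarith
  have h1 : ∑ i, ∑ j, (SY i j - SX i j) * (sinh (w i) * sinh (w j))
      ≤ ∑ i, ∑ j, ((SY i i - SX i i) / 2 * (|sinh (w i)| * |sinh (w j)|)
          + (SY j j - SX j j) / 2 * (|sinh (w j)| * |sinh (w i)|)) := by
    refine Finset.sum_le_sum fun i _ => Finset.sum_le_sum fun j _ => ?_
    calc _ ≤ |(SY i j - SX i j) * (sinh (w i) * sinh (w j))| := le_abs_self _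
      _ = |SX i j - SY i j| * (|sinh (w i)| * |sinh (w j)|) := by
          rw [abs_mul, abs_mul, abs_sub_comm]
      _ ≤ ((SY i i - SX i i + (SY j j - SX j j)) / 2) * (|sinh (w i)| * |sinh (w j)|) := by
          gcongr
          linarith [hcond i j]
      _ = _ := by ring
  have h2 : ∑ i, ∑ j, ((SY i i - SX i i) / 2 * (|sinh (w i)| * |sinh (w j)|)
          + (SY j j - SX j j) / 2 * (|sinh (w j)| * |sinh (w i)|))
      = ∑ i, (SY i i - SX i i) * |sinh (w i)| * ∑ j, |sinh (w j)| := by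
    simp_rw [Finset.sum_add_distrib]
    rw [Finset.sum_comm (f := fun i j => (SY j j - SX j j) / 2 * (|sinh (w j)| * |sinh (w i)|)),
      ← Finset.sum_add_distrib]
    refine Finset.sum_congr rfl fun i _ => ?_
    rw [← Finset.sum_add_distrib, Finset.mul_sum]
    refine Finset.sum_congr rfl fun j _ => ?_
    ring
  have h3 : ∑ i, (SY i i - SX i i) * |sinh (w i)| * ∑ j, |sinh (w j)|
      ≤ ∑ i, (SY i i - SX i i) * cosh (w i) * lseS K w := by
    have hs : ∑ j, |sinh (w j)| ≤ lseS K w := by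
      unfold lseS
      have : ∑ j, |sinh (w j)| ≤ ∑ j, cosh (w j) :=
        Finset.sum_le_sum fun i _ => abs_sinh_le_cosh' _
      linarith
    refine Finset.sum_le_sum fun i _ => ?_
    have := hD i
    have := abs_sinh_le_cosh' (w i)
    have := cosh_pos (w i)
    gcongr
  have h4 := h1.trans (h2.le.trans h3)
  simp_rw [← Finset.sum_mul, sub_mul, Finset.sum_sub_distrib] at h4
  have e : ∀ a b : ℝ, a / lseS K w - b / lseS K w ^ 2 = (a * lseS K w - b) / lseS K w ^ 2 := by
    intro a b; field_simp
  rw [e, e]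
  gcongr ?_ / _
  linarith

section gaussQ
variable {k : ℕ}

noncomputable def gQ (μ : Measure (Fin k → ℝ)) (a : ℝ) (F : (Fin k → ℝ) → ℝ)
    (z : Fin k → ℝ) : ℝ := ∫ x, F (z + a • x) ∂μ

lemma lip_bound {F : (Fin k → ℝ) → ℝ} (hF : LipschitzWith 1 F) (z v : Fin k → ℝ) :
    |F (z + v)| ≤ |F z| + ‖v‖ := by
  have := hF.dist_le_mul (z + v) z
  simp only [dist_eq_norm, NNReal.coe_one, one_mul, add_sub_cancel_left] at this
  rw [Real.norm_eq_abs] at this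
  have h2 := abs_sub_abs_le_abs_sub (F (z + v)) (F z)
  linarith

lemma gauss_norm_int (μ : Measure (Fin k → ℝ)) [IsGaussian μ] :
    Integrable (fun x => ‖x‖) μ := (IsGaussian.integrable_id (μ := μ)).norm

lemma gQ_int (μ : Measure (Fin k → ℝ)) [IsGaussian μ] (a : ℝ) {F : (Fin k → ℝ) → ℝ}
    (hF : LipschitzWith 1 F) (z : Fin k → ℝ) : Integrable (fun x => F (z + a • x)) μ := by
  have hc := hF.continuous
  refine Integrable.mono' ((integrable_const |F z|).add ((gauss_norm_int μ).const_mul |a|))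
    (by fun_prop) (Filter.Eventually.of_forall fun x => ?_)
  have := lip_bound hF z (a • x)
  rw [norm_smul] at this
  simpa using this

lemma gQ_lip (μ : Measure (Fin k → ℝ)) [IsGaussian μ] (a : ℝ) {F : (Fin k → ℝ) → ℝ}
    (hF : LipschitzWith 1 F) : LipschitzWith 1 (gQ μ a F) := by
  refine LipschitzWith.of_dist_le_mul fun x y => ?_
  unfold gQ
  rw [Real.dist_eq, ← integral_sub (gQ_int μ a hF x) (gQ_int μ a hF y)]
  have h := norm_integral_le_of_norm_le_const (μ := μ)
    (f := fun v => F (x + a • v) - F (y + a • v)) (C := dist x y)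
    (Filter.Eventually.of_forall fun v => by
      have := hF.dist_le_mul (x + a • v) (y + a • v)
      simpa [Real.dist_eq] using this)
  simpa using h

lemma gQ_int_prod (μ ν : Measure (Fin k → ℝ)) [IsGaussian μ] [IsGaussian ν] (a b : ℝ)
    {F : (Fin k → ℝ) → ℝ} (hF : LipschitzWith 1 F) (z : Fin k → ℝ) :
    Integrable (fun p : (Fin k → ℝ) × (Fin k → ℝ) => F (z + a • p.1 + b • p.2)) (μ.prod ν) := by
  have hc := hF.continuous
  refine Integrable.mono' ((integrable_const |F z|).add ((((gauss_norm_int μ).comp_fst ν).const_mul |a|).add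
    (((gauss_norm_int ν).comp_snd μ).const_mul |b|)))
    (by fun_prop) (Filter.Eventually.of_forall fun x => ?_)
  have := lip_bound hF z (a • x.1 + b • x.2)
  have h2 := norm_add_le (a • x.1) (b • x.2)
  rw [norm_smul, norm_smul] at h2
  rw [← add_assoc] at this
  simp only [Real.norm_eq_abs, Pi.add_apply] at *
  linarith

lemma gQ_comm (μ ν : Measure (Fin k → ℝ)) [IsGaussian μ] [IsGaussian ν] (a b : ℝ)
    {F : (Fin k → ℝ) → ℝ} (hF : LipschitzWith 1 F) :
    gQ μ a (gQ ν b F) = gQ ν b (gQ μ a F) := by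
  ext z
  unfold gQ
  rw [integral_integral_swap (gQ_int_prod μ ν a b hF z)]
  simp only [add_right_comm]

lemma gQ_semi (μ : Measure (Fin k → ℝ)) [IsGaussian μ] (h0 : μ[id] = 0) {s t : ℝ}
    (hs : 0 ≤ s) (ht : 0 < t) {F : (Fin k → ℝ) → ℝ} (hF : LipschitzWith 1 F) :
    gQ μ (√s) (gQ μ (√t) F) = gQ μ (√(s + t)) F := by
  ext z
  have hc := hF.continuous
  have hst : 0 < √(s + t) := Real.sqrt_pos.2 (by linarith)
  have hle : √s / √(s+t) ≤ 1 := by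
    rw [div_le_one hst]; exact Real.sqrt_le_sqrt (by linarith)
  set θ := arccos (√s / √(s + t)) with hθ
  have hcos : √(s+t) * cos θ = √s := by
    rw [hθ, cos_arccos (by have : 0 ≤ √s / √(s+t) := by positivity
                           linarith) hle]
    field_simp
  have hsin : √(s+t) * sin θ = √t := by
    rw [hθ, sin_arccos, ← Real.sqrt_mul (by linarith), div_pow, Real.sq_sqrt hs,
      Real.sq_sqrt (by linarith)]
    congr 1
    have : s + t ≠ 0 := by linarith
    field_simp
    ring
  have hrot := IsGaussian.map_rotation_eq_self h0 θ
  have e1 : ∫ p : (Fin k → ℝ) × (Fin k → ℝ), F (z + √(s+t) • p.1) ∂(μ.prod μ)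
      = gQ μ (√(s+t)) F z := by
    unfold gQ
    rw [integral_fun_fst (fun x => F (z + √(s+t) • x))]
    simp
  rw [← e1, ← hrot, integral_map (by fun_prop) (by fun_prop)]
  unfold gQ
  have e2 := integral_prod _ (gQ_int_prod μ μ (√s) (√t) hF z)
  rw [← e2]
  congr 1
  ext p
  rw [ContinuousLinearMap.rotation_apply]
  simp only [smul_add, smul_smul, hcos, hsin, add_assoc]

lemma gQ_iter (μ ν : Measure (Fin k → ℝ)) [IsGaussian μ] [IsGaussian ν] (hμ : μ[id] = 0)
    (hν : ν[id] = 0) {t C : ℝ} (ht : 0 < t)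
    {F : (Fin k → ℝ) → ℝ} (hF : LipschitzWith 1 F)
    (h : ∀ z, gQ μ (√t) F z ≤ gQ ν (√t) F z + C) (n : ℕ) :
    ∀ z, gQ μ (√(n * t)) F z ≤ gQ ν (√(n * t)) F z + n * C := by
  have mono : ∀ (ρ : Measure (Fin k → ℝ)) [IsGaussian ρ] (a : ℝ) (G H : (Fin k → ℝ) → ℝ) (c : ℝ),
      LipschitzWith 1 G → LipschitzWith 1 H → (∀ z, G z ≤ H z + c) →
      ∀ z, gQ ρ a G z ≤ gQ ρ a H z + c := by
    intro ρ _ a G H c hG hH hGH z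
    unfold gQ
    have : ∫ x, H (z + a • x) ∂ρ + c = ∫ x, (H (z + a • x) + c) ∂ρ := by
      rw [integral_add (gQ_int ρ a hH z) (integrable_const c)]; simp
    rw [this]
    exact integral_mono (gQ_int ρ a hG z) ((gQ_int ρ a hH z).add (integrable_const c))
      fun x => hGH _
  induction n with
  | zero => intro z; simp [gQ]
  | succ n ih =>
    intro z
    have hn : 0 ≤ (n:ℝ) * t := by positivity
    have e : ((n + 1 : ℕ) : ℝ) * t = n * t + t := by push_cast; ring
    rw [e, ← gQ_semi μ hμ hn ht hF, ← gQ_semi ν hν hn ht hF]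
    have s1 := mono μ (√(n*t)) _ _ C (gQ_lip μ _ hF) (gQ_lip ν _ hF) h z
    have s2 := mono ν (√t) _ _ (n * C) (gQ_lip μ _ hF) (gQ_lip ν _ hF) ih z
    rw [gQ_comm μ ν _ _ hF] at s1
    rw [gQ_comm ν ν _ _ hF] at s2
    push_cast
    linarith

lemma gauss_norm_pow_int (μ : Measure (Fin k → ℝ)) [IsGaussian μ] (p : ℝ) (hp : 0 < p) :
    Integrable (fun x => ‖x‖ ^ p) μ := by
  have := (IsGaussian.memLp_id μ (ENNReal.ofReal p) (by simp)).integrable_norm_rpow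
    (by simpa using hp) (by simp)
  simpa [ENNReal.toReal_ofReal hp.le] using this

lemma gauss_coord_int (μ : Measure (Fin k → ℝ)) [IsGaussian μ] (i j : Fin k) :
    Integrable (fun x => x i) μ ∧ Integrable (fun x => x i * x j) μ := by
  have h : ∀ i, MemLp (fun x : Fin k → ℝ => x i) 2 μ := fun i =>
    IsGaussian.memLp_dual μ (ContinuousLinearMap.proj (R := ℝ) (φ := fun _ : Fin k => ℝ) i) 2 (by simp)
  exact ⟨(h i).integrable (by norm_num), (h i).integrable_mul (h j)⟩

lemma lse_expand (μ : Measure (Fin k → ℝ)) [IsGaussian μ] (hμ : ∀ i, ∫ x, x i ∂μ = 0)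
    (S : Fin k → Fin k → ℝ) (hS : ∀ i j, S i j = ∫ x, x i * x j ∂μ)
    {K : ℝ} (hK : 0 < K) (a : ℝ) (ha : 0 ≤ a) (w : Fin k → ℝ) :
    |gQ μ a (lseF K) w - lseF K w - a ^ 2 / 2 * ((∑ i, S i i * cosh (w i)) / lseS K w
        - (∑ i, ∑ j, S i j * (sinh (w i) * sinh (w j))) / lseS K w ^ 2)|
      ≤ a ^ 3 * (6 * ∫ x, ‖x‖ ^ 3 ∂μ) := by
  have i3 : Integrable (fun x : Fin k → ℝ => ‖x‖ ^ 3) μ := by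
    have := gauss_norm_pow_int μ 3 (by norm_num)
    exact_mod_cast this
  have iF := gQ_int μ a (lseF_lip (k := k) hK) w
  have iA : Integrable (fun x => lseA K w (a • x)) μ := by
    unfold lseA
    refine Integrable.div_const (integrable_finsetSum _ fun i _ => Integrable.mul_const ?_ _) _
    exact (gauss_coord_int μ i i).1.const_mul a
  have eA : ∫ x, lseA K w (a • x) ∂μ = 0 := by
    unfold lseA
    simp only [Pi.smul_apply, smul_eq_mul]
    rw [integral_div, integral_finsetSum _ fun i _ => Integrable.mul_const
      ((gauss_coord_int μ i i).1.const_mul a) _]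
    simp [integral_mul_const, integral_const_mul, hμ]
  have eB : ∀ x, lseB K w (a • x) = a ^ 2 * ((∑ i, (x i * x i) * cosh (w i)) / lseS K w
        - (∑ i, ∑ j, (x i * x j) * (sinh (w i) * sinh (w j))) / lseS K w ^ 2) := by
    intro x
    unfold lseB
    have e1 : ∑ i, (a • x) i ^ 2 * cosh (w i) = a ^ 2 * ∑ i, (x i * x i) * cosh (w i) := by
      rw [Finset.mul_sum]
      refine Finset.sum_congr rfl fun i _ => ?_
      simp; ring
    have e2 : (∑ i, (a • x) i * sinh (w i)) ^ 2
        = a ^ 2 * ∑ i, ∑ j, (x i * x j) * (sinh (w i) * sinh (w j)) := by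
      rw [sq, Finset.sum_mul_sum, Finset.mul_sum]
      refine Finset.sum_congr rfl fun i _ => ?_
      rw [Finset.mul_sum]
      refine Finset.sum_congr rfl fun j _ => ?_
      simp; ring
    rw [div_pow, e1, e2]
    ring
  have iB1 : Integrable (fun x : Fin k → ℝ => (∑ i, (x i * x i) * cosh (w i)) / lseS K w) μ :=
    Integrable.div_const (integrable_finsetSum _ fun i _ =>
      (gauss_coord_int μ i i).2.mul_const _) _
  have iB2 : Integrable (fun x : Fin k → ℝ =>
      (∑ i, ∑ j, (x i * x j) * (sinh (w i) * sinh (w j))) / lseS K w ^ 2) μ :=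
    Integrable.div_const (integrable_finsetSum _ fun i _ => integrable_finsetSum _ fun j _ =>
      (gauss_coord_int μ i j).2.mul_const _) _
  have iB : Integrable (fun x => lseB K w (a • x)) μ := by
    simp_rw [eB]
    exact (iB1.sub iB2).const_mul _
  have eBi : ∫ x, lseB K w (a • x) ∂μ = a ^ 2 * ((∑ i, S i i * cosh (w i)) / lseS K w
        - (∑ i, ∑ j, S i j * (sinh (w i) * sinh (w j))) / lseS K w ^ 2) := by
    simp_rw [eB]
    rw [integral_const_mul, integral_sub iB1 iB2, integral_div, integral_div,
      integral_finsetSum _ fun i _ => (gauss_coord_int μ i i).2.mul_const _,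
      integral_finsetSum _ fun i _ => integrable_finsetSum _ fun j _ =>
        (gauss_coord_int μ i j).2.mul_const _]
    have c2 : ∀ p q r s : ℝ, p = q → r = s → a ^ 2 * (p / lseS K w - r / lseS K w ^ 2)
        = a ^ 2 * (q / lseS K w - s / lseS K w ^ 2) := by rintro p q r s rfl rfl; rfl
    apply c2
    · refine Finset.sum_congr rfl fun i _ => ?_
      rw [integral_mul_const, hS]
    · refine Finset.sum_congr rfl fun i _ => ?_
      rw [integral_finsetSum _ fun j _ => (gauss_coord_int μ i j).2.mul_const _]
      refine Finset.sum_congr rfl fun j _ => ?_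
      rw [integral_mul_const, hS]
  have key := norm_integral_le_of_norm_le (μ := μ)
    (f := fun x => lseF K (w + a • x) - lseF K w - lseA K w (a • x) - lseB K w (a • x) / 2)
    (g := fun x => a ^ 3 * (6 * ‖x‖ ^ 3)) ((i3.const_mul 6).const_mul _)
    (Filter.Eventually.of_forall fun x => by
      have := lseF_taylor hK w (a • x)
      rw [norm_smul, Real.norm_eq_abs, abs_of_nonneg ha] at this
      rw [Real.norm_eq_abs]
      refine this.trans (le_of_eq ?_)
      ring)
  have i1 : Integrable (fun x => lseF K (w + a • x) - lseF K w) μ := iF.sub (integrable_const _)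
  have i2 : Integrable (fun x => lseF K (w + a • x) - lseF K w - lseA K w (a • x)) μ := i1.sub iA
  rw [integral_sub i2 (iB.div_const 2), integral_sub i1 iA, integral_sub iF (integrable_const _),
    integral_div, eA, eBi, integral_const_mul, integral_const_mul] at key
  simp only [integral_const, probReal_univ, one_smul, sub_zero, Real.norm_eq_abs] at key
  unfold gQ
  refine le_trans (le_of_eq ?_) key
  congr 1
  ring

lemma lse_compare (μ ν : Measure (Fin k → ℝ)) [IsGaussian μ] [IsGaussian ν]
    (hμ : ∀ i, ∫ x, x i ∂μ = 0) (hν : ∀ i, ∫ x, x i ∂ν = 0)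
    (hμ' : μ[id] = 0) (hν' : ν[id] = 0)
    (SX SY : Fin k → Fin k → ℝ) (hSX : ∀ i j, SX i j = ∫ x, x i * x j ∂μ)
    (hSY : ∀ i j, SY i j = ∫ x, x i * x j ∂ν)
    (hcond : ∀ i j, 2 * |SX i j - SY i j| ≤ SY i i - SX i i + (SY j j - SX j j))
    {K : ℝ} (hK : 0 < K) {β : ℝ} (hβ : 0 < β) :
    ∫ x, lseF K (β • x) ∂μ ≤ ∫ x, lseF K (β • x) ∂ν := by
  set C := 6 * ∫ x, ‖x‖ ^ 3 ∂μ + 6 * ∫ x, ‖x‖ ^ 3 ∂ν with hC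
  have step : ∀ a : ℝ, 0 ≤ a → ∀ w, gQ μ a (lseF K) w ≤ gQ ν a (lseF K) w + a ^ 3 * C := by
    intro a ha w
    have h1 := lse_expand μ hμ SX hSX hK a ha w
    have h2 := lse_expand ν hν SY hSY hK a ha w
    have h3 := mul_le_mul_of_nonneg_left (lse_diag hK w SX SY hcond) (by positivity : 0 ≤ a ^ 2 / 2)
    rw [abs_le] at h1 h2
    rw [hC, mul_add]
    linarith [h1.1, h1.2, h2.1, h2.2]
  have main : ∀ n : ℕ, gQ μ β (lseF K) 0 ≤ gQ ν β (lseF K) 0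
      + β ^ 3 * C * √(1 / ((n:ℝ) + 1)) := by
    intro n
    have hn : (0:ℝ) < n + 1 := by positivity
    have ht : 0 < β ^ 2 / ((n:ℝ) + 1) := by positivity
    have h := gQ_iter μ ν hμ' hν' ht (lseF_lip (k := k) hK)
      (step _ (Real.sqrt_nonneg (β ^ 2 / ((n:ℝ) + 1)))) (n + 1) 0
    have e1 : ((n + 1 : ℕ) : ℝ) * (β ^ 2 / ((n:ℝ) + 1)) = β ^ 2 := by
      push_cast; field_simp
    have e2 : √(β ^ 2 / ((n:ℝ) + 1)) = β * √(1 / ((n:ℝ) + 1)) := by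
      rw [div_eq_mul_one_div, Real.sqrt_mul (by positivity), Real.sqrt_sq hβ.le]
    rw [e1, Real.sqrt_sq hβ.le, e2] at h
    refine h.trans (le_of_eq ?_)
    congr 1
    have e3 : √(1 / ((n:ℝ) + 1)) ^ 2 = 1 / ((n:ℝ) + 1) := Real.sq_sqrt (by positivity)
    calc _ = β ^ 3 * C * √(1 / ((n:ℝ) + 1)) * (((n:ℝ) + 1) * √(1 / ((n:ℝ) + 1)) ^ 2) := by
          push_cast; ring
      _ = _ := by rw [e3]; field_simp
  have lim : Filter.Tendsto (fun n : ℕ => gQ ν β (lseF K) 0 + β ^ 3 * C * √(1 / ((n:ℝ) + 1)))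
      Filter.atTop (nhds (gQ ν β (lseF K) 0 + β ^ 3 * C * √0)) :=
    (((Real.continuous_sqrt.tendsto 0).comp tendsto_one_div_add_atTop_nhds_zero_nat).const_mul
      _).const_add _
  have := ge_of_tendsto' lim main
  simpa [gQ] using this

lemma lse_sandwich {a : ℝ} (ha : 0 ≤ a) {β : ℝ} (hβ : 0 < β) (x : Fin k → ℝ) :
    max a ‖x‖ ≤ (lseF (exp (β * a)) (β • x) + log 2) / β ∧
    lseF (exp (β * a)) (β • x) ≤ β * max a ‖x‖ + log (k + 1) := by
  have hp := lseS_pos (exp_pos (β * a)) (β • x)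
  have hcn : ∀ i, 0 ≤ cosh ((β • x) i) := fun i => (cosh_pos _).le
  constructor
  · have key : ∀ y, exp (β * y) ≤ 2 * lseS (exp (β * a)) (β • x) →
        y ≤ (lseF (exp (β * a)) (β • x) + log 2) / β := by
      intro y hy
      rw [le_div_iff₀ hβ]
      unfold lseF
      rw [← log_mul hp.ne' (by norm_num), mul_comm y, le_log_iff_exp_le (by positivity)]
      linarith
    have h1 : a ≤ (lseF (exp (β * a)) (β • x) + log 2) / β := by
      apply key
      have h := Finset.sum_nonneg fun i (_ : i ∈ Finset.univ) => hcn i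
      have := exp_pos (β * a)
      unfold lseS
      linarith
    refine max_le h1 ((pi_norm_le_iff_of_nonneg (ha.trans h1)).2 fun i => ?_)
    apply key
    have h := Finset.single_le_sum (fun i _ => hcn i) (Finset.mem_univ i)
    have h2 := exp_pos (β * a)
    have h3 : exp (β * ‖x i‖) ≤ 2 * cosh ((β • x) i) := by
      rw [← cosh_abs, cosh_eq]
      simp only [Pi.smul_apply, smul_eq_mul, abs_mul, abs_of_pos hβ, Real.norm_eq_abs]
      have := exp_pos (-(β * |x i|))
      linarith
    unfold lseS
    linarith
  · unfold lseF
    rw [log_le_iff_le_exp hp, exp_add, exp_log (by positivity)]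
    have h1 : exp (β * a) ≤ exp (β * max a ‖x‖) := by
      gcongr; exact le_max_left _ _
    have h2 : ∑ i, cosh ((β • x) i) ≤ ∑ i : Fin k, exp (β * max a ‖x‖) := by
      refine Finset.sum_le_sum fun i _ => ?_
      have h3 : cosh ((β • x) i) ≤ exp (β * |x i|) := by
        rw [← cosh_abs]
        simp only [Pi.smul_apply, smul_eq_mul, abs_mul, abs_of_pos hβ]
        rw [cosh_eq]
        have : exp (-(β * |x i|)) ≤ exp (β * |x i|) := by
          apply exp_le_exp.2
          have : 0 ≤ β * |x i| := by positivity
          linarith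
        linarith
      refine h3.trans ?_
      gcongr
      exact (norm_le_pi_norm x i).trans (le_max_right _ _)
    simp only [Finset.sum_const, Finset.card_univ, Fintype.card_fin, nsmul_eq_mul] at h2
    unfold lseS
    linarith

lemma max_compare (μ ν : Measure (Fin k → ℝ)) [IsGaussian μ] [IsGaussian ν]
    (h : ∀ K : ℝ, 0 < K → ∀ β : ℝ, 0 < β →
      ∫ x, lseF K (β • x) ∂μ ≤ ∫ x, lseF K (β • x) ∂ν) {a : ℝ} (ha : 0 ≤ a) :
    ∫ x, max a ‖x‖ ∂μ ≤ ∫ x, max a ‖x‖ ∂ν := by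
  have imax : ∀ (ρ : Measure (Fin k → ℝ)) [IsGaussian ρ], Integrable (fun x => max a ‖x‖) ρ :=
    fun ρ _ => (integrable_const a).sup (gauss_norm_int ρ)
  have main : ∀ n : ℕ, ∫ x, max a ‖x‖ ∂μ ≤ ∫ x, max a ‖x‖ ∂ν
      + (log (k + 1) + log 2) * (1 / ((n:ℝ) + 1)) := by
    intro n
    set β : ℝ := n + 1
    have hβ : 0 < β := by positivity
    have hK := exp_pos (β * a)
    have iF : ∀ (ρ : Measure (Fin k → ℝ)) [IsGaussian ρ],
        Integrable (fun x => lseF (exp (β * a)) (β • x)) ρ := fun ρ _ => by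
      simpa using gQ_int ρ β (lseF_lip (k := k) hK) 0
    have s1 : ∫ x, max a ‖x‖ ∂μ ≤ (∫ x, lseF (exp (β * a)) (β • x) ∂μ + log 2) / β := by
      have := integral_mono (imax μ) (((iF μ).add (integrable_const (log 2))).div_const β)
        (fun x => (lse_sandwich ha hβ x).1)
      refine this.trans (le_of_eq ?_)
      simp only [Pi.add_apply]
      rw [integral_div, integral_add (iF μ) (integrable_const _)]
      simp
    have s2 : ∫ x, lseF (exp (β * a)) (β • x) ∂ν ≤ β * ∫ x, max a ‖x‖ ∂ν + log (k + 1) := by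
      have := integral_mono (iF ν) (((imax ν).const_mul β).add (integrable_const (log (k+1))))
        (fun x => (lse_sandwich ha hβ x).2)
      refine this.trans (le_of_eq ?_)
      simp only [Pi.add_apply]
      rw [integral_add ((imax ν).const_mul β) (integrable_const _), integral_const_mul]
      simp
    calc _ ≤ _ := s1
      _ ≤ (β * ∫ x, max a ‖x‖ ∂ν + log (k + 1) + log 2) / β := by
          have := (h _ hK β hβ).trans s2
          gcongr
      _ = _ := by field_simp; ring
  have lim := (tendsto_one_div_add_atTop_nhds_zero_nat (𝕜 := ℝ)).const_mul
    (log (k + 1) + log 2) |>.const_add (∫ x, max a ‖x‖ ∂ν)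
  have := ge_of_tendsto' lim main
  simpa using this

lemma mix_point {m u : ℝ} (hm : 1 < m) (hu : 0 ≤ u) :
    ∫⁻ a in Set.Ioi (0:ℝ), ENNReal.ofReal (a ^ (m - 2)) * ENNReal.ofReal (max a u - a)
      = ENNReal.ofReal (u ^ m / (m * (m - 1))) := by
  rw [← Set.Ioc_union_Ioi_eq_Ioi hu, lintegral_union measurableSet_Ioi
    (Set.Ioc_disjoint_Ioi le_rfl)]
  have z : ∫⁻ a in Set.Ioi u, ENNReal.ofReal (a ^ (m - 2)) * ENNReal.ofReal (max a u - a) = 0 := by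
    rw [setLIntegral_congr_fun (g := fun _ => 0) measurableSet_Ioi]
    · simp
    · intro a ha
      simp [max_eq_left (le_of_lt (Set.mem_Ioi.1 ha))]
  have e : ∫⁻ a in Set.Ioc 0 u, ENNReal.ofReal (a ^ (m - 2)) * ENNReal.ofReal (max a u - a)
      = ∫⁻ a in Set.Ioc 0 u, ENNReal.ofReal (u * a ^ (m - 2) - a ^ (m - 1)) := by
    refine setLIntegral_congr_fun measurableSet_Ioc fun a ha => ?_
    have h0 : 0 ≤ a ^ (m - 2) := rpow_nonneg ha.1.le _
    simp only [max_eq_right ha.2]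
    rw [← ENNReal.ofReal_mul h0]
    congr 1
    have : a ^ (m - 1) = a ^ (m - 2) * a := by
      rw [← rpow_add_one ha.1.ne']; congr 1; ring
    rw [this]; ring
  have j1 : IntervalIntegrable (fun a : ℝ => a ^ (m - 2)) volume 0 u :=
    intervalIntegral.intervalIntegrable_rpow' (by linarith)
  have j2 : IntervalIntegrable (fun a : ℝ => a ^ (m - 1)) volume 0 u :=
    intervalIntegral.intervalIntegrable_rpow' (by linarith)
  rw [z, add_zero, e, ← ofReal_integral_eq_lintegral_ofReal]
  · congr 1
    rw [← intervalIntegral.integral_of_le hu, intervalIntegral.integral_sub (j1.const_mul u) j2,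
      intervalIntegral.integral_const_mul, integral_rpow (by left; linarith),
      integral_rpow (by left; linarith)]
    have e1 : m - 2 + 1 = m - 1 := by ring
    have e2 : m - 1 + 1 = m := by ring
    rw [e1, e2, zero_rpow (by linarith), zero_rpow (by linarith)]
    have h1 : m - 1 ≠ 0 := by linarith
    have h2 : m ≠ 0 := by linarith
    have : u * u ^ (m - 1) = u ^ m := by
      rcases hu.eq_or_lt with rfl | hu
      · rw [zero_rpow h2]; simp
      · rw [mul_comm, ← rpow_add_one hu.ne', e2]
    field_simp
    rw [sub_zero, sub_zero, mul_right_comm, this]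
    ring
  · exact ((j1.const_mul u).sub j2).1
  · refine (ae_restrict_iff' measurableSet_Ioc).2 (Filter.Eventually.of_forall fun a ha => ?_)
    have h0 : 0 ≤ a ^ (m - 2) := rpow_nonneg ha.1.le _
    have : a ^ (m - 1) = a ^ (m - 2) * a := by
      rw [← rpow_add_one ha.1.ne']; congr 1; ring
    simp only [Pi.zero_apply]
    rw [this]
    nlinarith [ha.2]

lemma pow_compare (μ ν : Measure (Fin k → ℝ)) [IsGaussian μ] [IsGaussian ν]
    (h : ∀ a : ℝ, 0 ≤ a → ∫ x, max a ‖x‖ ∂μ ≤ ∫ x, max a ‖x‖ ∂ν) {m : ℝ} (hm : 1 ≤ m) :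
    ∫ x, ‖x‖ ^ m ∂μ ≤ ∫ x, ‖x‖ ^ m ∂ν := by
  rcases hm.eq_or_lt with rfl | hm
  · simpa [max_eq_right (norm_nonneg _)] using h 0 le_rfl
  have imax : ∀ (a : ℝ) (ρ : Measure (Fin k → ℝ)) [IsGaussian ρ],
      Integrable (fun x => max a ‖x‖ - a) ρ :=
    fun a ρ _ => ((integrable_const a).sup (gauss_norm_int ρ)).sub (integrable_const a)
  have rep : ∀ (ρ : Measure (Fin k → ℝ)) [IsGaussian ρ],
      ∫⁻ x, ENNReal.ofReal (‖x‖ ^ m / (m * (m - 1))) ∂ρ =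
      ∫⁻ a in Set.Ioi (0:ℝ), ENNReal.ofReal (a ^ (m - 2)) *
        ENNReal.ofReal (∫ x, max a ‖x‖ ∂ρ - a) := by
    intro ρ _
    simp_rw [← mix_point hm (norm_nonneg _)]
    rw [lintegral_lintegral_swap (by fun_prop)]
    refine lintegral_congr fun a => ?_
    rw [lintegral_const_mul _ (by fun_prop), ← ofReal_integral_eq_lintegral_ofReal (imax a ρ)
      (Filter.Eventually.of_forall fun x => by simp)]
    have im : Integrable (fun x => max a ‖x‖) ρ := (integrable_const a).sup (gauss_norm_int ρ)
    rw [integral_sub im (integrable_const a)]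
    simp
  have ip : ∀ (ρ : Measure (Fin k → ℝ)) [IsGaussian ρ],
      Integrable (fun x => ‖x‖ ^ m / (m * (m - 1))) ρ :=
    fun ρ _ => (gauss_norm_pow_int ρ m (by linarith)).div_const _
  have hc : 0 < m * (m - 1) := mul_pos (by linarith) (by linarith)
  have le : ∫⁻ x, ENNReal.ofReal (‖x‖ ^ m / (m * (m - 1))) ∂μ
      ≤ ∫⁻ x, ENNReal.ofReal (‖x‖ ^ m / (m * (m - 1))) ∂ν := by
    rw [rep μ, rep ν]
    refine setLIntegral_mono' measurableSet_Ioi fun a ha => ?_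
    have := h a (le_of_lt ha)
    gcongr
  have nn : ∀ (ρ : Measure (Fin k → ℝ)), 0 ≤ᵐ[ρ] fun x => ‖x‖ ^ m / (m * (m - 1)) :=
    fun ρ => Filter.Eventually.of_forall fun x =>
      div_nonneg (rpow_nonneg (norm_nonneg _) _) hc.le
  rw [← ofReal_integral_eq_lintegral_ofReal (ip μ) (nn μ),
    ← ofReal_integral_eq_lintegral_ofReal (ip ν) (nn ν),
    ENNReal.ofReal_le_ofReal_iff (integral_nonneg_of_ae (nn ν)), integral_div, integral_div] at le
  exact (div_le_div_iff_of_pos_right hc).1 le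

lemma iSup_abs_eq_norm (x : Fin k → ℝ) : ⨆ i, |x i| = ‖x‖ := by
  apply le_antisymm
  · exact Real.iSup_le (fun i => norm_le_pi_norm x i) (norm_nonneg _)
  · refine (pi_norm_le_iff_of_nonneg (Real.iSup_nonneg fun i => abs_nonneg _)).2 fun i => ?_
    exact le_ciSup (f := fun i => |x i|) (Set.finite_range _).bddAbove i

end gaussQ


lemma gaussVec_law {Ω : Type*} [MeasurableSpace Ω] {k : ℕ} (P : Measure Ω)
    (X : Ω → Fin k → ℝ) (hXmeas : Measurable X) (hX : IsCenteredGaussianVec P X) :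
    IsGaussian (P.map X) ∧ (∀ i, ∫ x, x i ∂(P.map X) = 0) := by
  constructor
  · refine isGaussian_of_map_eq_gaussianReal fun L => ?_
    rw [Measure.map_map (by fun_prop) hXmeas]
    have hL : (L ∘ X) = fun ω => ∑ i, (fun i => L (Pi.single i 1)) i * X ω i := ?_
    · rw [hL]
      exact ⟨0, _, hX (fun i => L (Pi.single i 1))⟩
    ext ω
    simp only [Function.comp]
    conv_lhs => rw [pi_eq_sum_univ' (X ω)]
    simp only [map_sum, map_smul, smul_eq_mul]
    refine Finset.sum_congr rfl fun i _ => ?_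
    rw [mul_comm]
  · intro i
    have h := hX (Pi.single i 1)
    have e : (fun ω => ∑ j, (Pi.single i 1 : Fin k → ℝ) j * X ω j) = fun ω => X ω i := by
      ext ω
      simp [Pi.single_apply]
    rw [e] at h
    rw [integral_map hXmeas.aemeasurable (measurable_pi_apply i).aestronglyMeasurable]
    have hm : Measurable fun ω => X ω i := (measurable_pi_apply i).comp hXmeas
    have h2 : ∫ y, y ∂(P.map fun ω => X ω i) = ∫ ω, X ω i ∂P :=
      integral_map hm.aemeasurable (by fun_prop)
    rw [← h2, h]
    simp

/-- **Theorem (moment comparison for suprema of Gaussian vectors).**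
If `X ~ N(0, SX)` and `Y ~ N(0, SY)` are centered Gaussian vectors in `ℝ^k` with
`2 |SX i j - SY i j| ≤ (SY i i - SX i i) + (SY j j - SX j j)` for all `i j`, then for
every `m ≥ 1`, `E[(max_i |X_i|)^m] ≤ E[(max_i |Y_i|)^m]`. -/
theorem moment_comparison_max_abs
    {Ω : Type*} [MeasurableSpace Ω] {k : ℕ} (P : Measure Ω) [IsProbabilityMeasure P]
    (X Y : Ω → Fin k → ℝ) (hXmeas : Measurable X) (hYmeas : Measurable Y)
    (hX : IsCenteredGaussianVec P X) (hY : IsCenteredGaussianVec P Y)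
    (SX SY : Fin k → Fin k → ℝ)
    (hSX : ∀ i j, SX i j = ∫ ω, X ω i * X ω j ∂P)
    (hSY : ∀ i j, SY i j = ∫ ω, Y ω i * Y ω j ∂P)
    (hcond : ∀ i j, 2 * |SX i j - SY i j| ≤ SY i i - SX i i + (SY j j - SX j j))
    (m : ℝ) (hm : 1 ≤ m) :
    ∫ ω, (⨆ i, |X ω i|) ^ m ∂P ≤ ∫ ω, (⨆ i, |Y ω i|) ^ m ∂P := by
  obtain ⟨gX, mX⟩ := gaussVec_law P X hXmeas hX
  obtain ⟨gY, mY⟩ := gaussVec_law P Y hYmeas hY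
  have id0 : ∀ (ρ : Measure (Fin k → ℝ)) [IsGaussian ρ], (∀ i, ∫ x, x i ∂ρ = 0) → ρ[id] = 0 := by
    intro ρ _ h
    ext i
    simp only [id_eq]
    rw [eval_integral (fun j => (gauss_coord_int ρ j j).1)]
    simpa using h i
  have hSX' : ∀ i j, SX i j = ∫ x, x i * x j ∂(P.map X) := fun i j => by
    rw [hSX, integral_map hXmeas.aemeasurable (by fun_prop)]
  have hSY' : ∀ i j, SY i j = ∫ x, x i * x j ∂(P.map Y) := fun i j => by
    rw [hSY, integral_map hYmeas.aemeasurable (by fun_prop)]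
  have key := pow_compare (P.map X) (P.map Y) (fun a ha => max_compare _ _
    (fun K hK β hβ => lse_compare _ _ mX mY (id0 _ mX) (id0 _ mY) SX SY hSX' hSY' hcond hK hβ) ha) hm
  simp_rw [iSup_abs_eq_norm]
  rwa [integral_map hXmeas.aemeasurable
      (measurable_norm.pow_const m).aestronglyMeasurable,
    integral_map hYmeas.aemeasurable
      (measurable_norm.pow_const m).aestronglyMeasurable] at key
end

section
/- Let g ~ N(0, I_n) be a standard Gaussian vector in R^n, and let X_1 = M_1 g, Y_1 = M_2 g for deterministic nonzero row vectors M_1, M_2 ∈ R^{1×n} such that |Corr(X_1, Y_1)| < 1. Then for every m > 0 there exists a constant C(m) > 0 (depending only on m) such that for all real p > 1: E[(max(|X_1|, |Y_1|))^{m−2} · (min(|X_1|, |Y_1|)/max(|X_1|, |Y_1|))^{p−1}] ≤ C(m, X_1, Y_1)/p, where C(m, X_1, Y_1) = C(m) · (max(Var(X_1), Var(Y_1)))^{m/2} / sqrt(Var(X_1) · Var(Y_1) · (1 − Corr(X_1, Y_1)^2)). -/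
open MeasureTheory ProbabilityTheory Real
open scoped NNReal BigOperators

/-- The covariance `Cov(f, g) = E[f g] - E[f] E[g]` of two real random variables. -/
noncomputable def covar {Ω : Type*} [MeasurableSpace Ω] (P : Measure Ω)
    (f g : Ω → ℝ) : ℝ :=
  (∫ ω, f ω * g ω ∂P) - (∫ ω, f ω ∂P) * ∫ ω, g ω ∂P

/-- The Pearson correlation `Corr(f, g) = Cov(f, g) / sqrt(Var f · Var g)`. -/
noncomputable def corr {Ω : Type*} [MeasurableSpace Ω] (P : Measure Ω)
    (f g : Ω → ℝ) : ℝ :=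
  covar P f g / Real.sqrt (variance f P * variance g P)

/-- The law of a standard Gaussian vector `g ~ N(0, I_n)` in `ℝ^n`. -/
noncomputable def stdGaussianPi (n : ℕ) : Measure (Fin n → ℝ) :=
  Measure.pi fun _ => gaussianReal 0 1

/-- The linear form `x ↦ M x = ∑ i, M i * x i` given by a row vector `M ∈ ℝ^{1×n}`. -/
def linForm {n : ℕ} (M : Fin n → ℝ) : (Fin n → ℝ) → ℝ :=
  fun x => ∑ i, M i * x i


lemma aux_inner_abs {r p : ℝ} (hr : 0 < r) (hp : 1 < p) :
    ∫⁻ y : ℝ in Set.Icc (-r) r, ENNReal.ofReal (|y| ^ (p - 1)) = ENNReal.ofReal (2 / p * r ^ p) := by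
  have hcont : Continuous fun y : ℝ => |y| ^ (p - 1) :=
    continuous_abs.rpow_const (fun _ => Or.inr (by linarith))
  rw [← ofReal_integral_eq_lintegral_ofReal]
  · congr 1
    have h1 := integral_comp_abs (f := (Set.Iic r).indicator (fun t : ℝ => t ^ (p - 1)))
    have h2 : (fun y : ℝ => (Set.Iic r).indicator (fun t : ℝ => t ^ (p - 1)) |y|)
        = (Set.Icc (-r) r).indicator (fun y => |y| ^ (p - 1)) := by
      ext y
      simp only [Set.indicator, Set.mem_Iic, Set.mem_Icc, abs_le]
    rw [h2, integral_indicator measurableSet_Icc, setIntegral_indicator measurableSet_Iic,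
      Set.Ioi_inter_Iic, ← intervalIntegral.integral_of_le hr.le,
      integral_rpow (Or.inl (by linarith))] at h1
    rw [h1, sub_add_cancel, Real.zero_rpow (by linarith)]
    ring
  · exact (hcont.continuousOn).integrableOn_compact isCompact_Icc
  · exact Filter.Eventually.of_forall fun y => by positivity

/-- integrand on the half `|y| ≤ |x|` -/
noncomputable def auxF (m p x y : ℝ) : ENNReal :=
  if |y| ≤ |x| then ENNReal.ofReal (|x| ^ (m - 2) * (|y| / |x|) ^ (p - 1)) else 0

lemma aux_measF (m p : ℝ) : Measurable (fun q : ℝ × ℝ => auxF m p q.1 q.2) := by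
  unfold auxF
  refine Measurable.ite ?_ (by fun_prop) measurable_const
  exact measurableSet_le (by fun_prop) (by fun_prop)

lemma aux_inner {m p : ℝ} (hp : 1 < p) (x : ℝ) :
    ∫⁻ y, auxF m p x y ≤ ENNReal.ofReal (2 / p * |x| ^ (m - 1)) := by
  rcases eq_or_ne x 0 with rfl | hx
  · have : ∀ y, auxF m p 0 y = 0 := fun y => by
      simp [auxF, Real.zero_rpow (show p - 1 ≠ 0 by linarith)]
    simp [this]
  have hr : 0 < |x| := abs_pos.2 hx
  have h1 : (fun y => auxF m p x y) = (Set.Icc (-|x|) |x|).indicator (fun y =>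
      ENNReal.ofReal (|x| ^ (m - 1 - p)) * ENNReal.ofReal (|y| ^ (p - 1))) := by
    ext y
    simp only [auxF, Set.indicator, Set.mem_Icc, abs_le]
    split_ifs
    · rw [← ENNReal.ofReal_mul (by positivity), Real.div_rpow (abs_nonneg _) (abs_nonneg _),
        show m - 1 - p = (m - 2) - (p - 1) by ring, Real.rpow_sub hr (m - 2) (p - 1)]
      congr 1
      generalize |x| ^ (m - 2) = A
      generalize |x| ^ (p - 1) = B
      ring
    · rfl
  rw [h1, lintegral_indicator measurableSet_Icc, lintegral_const_mul' _ _ ENNReal.ofReal_ne_top,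
    aux_inner_abs hr hp, ← ENNReal.ofReal_mul (by positivity)]
  apply le_of_eq
  congr 1
  rw [show m - 1 = (m - 1 - p) + p by ring, Real.rpow_add hr]
  ring_nf

lemma aux_gauss_le {w : ℝ≥0} (hw : w ≠ 0) (f : ℝ → ENNReal) (hf : Measurable f) :
    ∫⁻ z, f z ∂(gaussianReal 0 w) ≤ ENNReal.ofReal ((√(2 * π * w))⁻¹) * ∫⁻ z, f z := by
  rw [gaussianReal_of_var_ne_zero _ hw,
    lintegral_withDensity_eq_lintegral_mul _ (measurable_gaussianPDF 0 w) hf,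
    ← lintegral_const_mul _ hf]
  refine lintegral_mono fun z => ?_
  simp only [Pi.mul_apply]
  gcongr
  unfold gaussianPDF gaussianPDFReal
  apply ENNReal.ofReal_le_ofReal
  apply mul_le_of_le_one_right (by positivity)
  rw [Real.exp_le_one_iff]
  have : 0 ≤ (z - 0) ^ 2 / (2 * (w : ℝ)) := by positivity
  rw [neg_div]; linarith

/-- absolute moment -/
noncomputable def auxK (m : ℝ) : ENNReal := ∫⁻ x, ENNReal.ofReal (|x| ^ (m - 1)) ∂(gaussianReal 0 1)

lemma auxK_lt_top {m : ℝ} (hm : 0 < m) : auxK m < ⊤ := by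
  unfold auxK
  have hI : Integrable (fun x : ℝ => |x| ^ (m - 1) * Real.exp (-(1/2) * x ^ 2)) := by
    have h0 := integrable_rpow_mul_exp_neg_mul_sq (b := 1/2) (by norm_num) (s := m - 1) (by linarith)
    have h1 := h0.integrableOn (s := Set.Ioi 0)
    have h2 : IntegrableOn (fun x : ℝ => |x| ^ (m - 1) * Real.exp (-(1/2) * x ^ 2)) (Set.Ioi 0) := by
      refine h1.congr_fun (fun x hx => ?_) measurableSet_Ioi
      simp only [abs_of_pos (Set.mem_Ioi.1 hx)]
    have h3 : IntegrableOn (fun x : ℝ => |x| ^ (m - 1) * Real.exp (-(1/2) * x ^ 2)) (Set.Iio 0) := by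
      have h5 : IntegrableOn (fun x : ℝ => |x| ^ (m - 1) * Real.exp (-(1/2) * x ^ 2))
        (Set.Ioi (-0)) := by rw [neg_zero]; exact h2
      have h6 := IntegrableOn.comp_neg_Iio (c := (0:ℝ)) h5
      simp only [abs_neg, neg_sq] at h6
      exact h6
    rw [← integrableOn_univ, ← Set.Iic_union_Ioi (a := (0:ℝ))]
    exact ((integrableOn_Iic_iff_integrableOn_Iio).2 h3).union h2
  rw [gaussianReal_of_var_ne_zero _ one_ne_zero,
    lintegral_withDensity_eq_lintegral_mul _ (measurable_gaussianPDF 0 1) (by fun_prop)]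
  have h4 := (hI.const_mul ((√(2 * π))⁻¹)).lintegral_lt_top
  refine lt_of_eq_of_lt (lintegral_congr fun x => ?_) h4
  simp only [Pi.mul_apply, gaussianPDF, gaussianPDFReal]
  rw [← ENNReal.ofReal_mul (by positivity)]
  congr 1
  simp only [NNReal.coe_one, mul_one, sub_zero]
  rw [show -x ^ 2 / 2 = -(1/2) * x ^ 2 by ring]
  ring

lemma aux_moment (m : ℝ) {a : ℝ} (ha : 0 < a) :
    ∫⁻ x, ENNReal.ofReal (|x| ^ (m - 1)) ∂(gaussianReal 0 a.toNNReal)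
      = ENNReal.ofReal (√a ^ (m - 1)) * auxK m := by
  have h : gaussianReal 0 a.toNNReal = (gaussianReal 0 1).map (fun x => √a * x) := by
    rw [gaussianReal_map_const_mul]
    congr 1
    · simp
    · ext; simp [Real.sq_sqrt ha.le, ha.le]
  rw [h, lintegral_map (by fun_prop) (by fun_prop), auxK,
    ← lintegral_const_mul' _ _ ENNReal.ofReal_ne_top]
  refine lintegral_congr fun x => ?_
  rw [← ENNReal.ofReal_mul (by positivity), abs_mul, abs_of_nonneg (Real.sqrt_nonneg a),
    Real.mul_rpow (by positivity) (by positivity)]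

lemma aux_half {Ω : Type*} [MeasurableSpace Ω] {P : Measure Ω} {X Y : Ω → ℝ}
    (hX : Measurable X) (hY : Measurable Y)
    (hXY : HasGaussianLaw (fun ω => (X ω, Y ω)) P) (hX0 : P[X] = 0) (hY0 : P[Y] = 0)
    {a b c : ℝ} (hVX : Var[X; P] = a) (hVY : Var[Y; P] = b) (hc : cov[X, Y; P] = c)
    (ha : 0 < a) (hd : 0 < a * b - c ^ 2) {m p : ℝ} (hp : 1 < p) :
    ∫⁻ ω, auxF m p (X ω) (Y ω) ∂P
      ≤ auxK m * ENNReal.ofReal (√a ^ m / √(a * b - c ^ 2) / p) := by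
  have := hXY.isProbabilityMeasure
  have hXm := hXY.fst.memLp_two
  have hYm := hXY.snd.memLp_two
  set Z : Ω → ℝ := fun ω => Y ω - (c / a) * X ω with hZ
  have hZmeas : Measurable Z := by fun_prop
  have hXZ : HasGaussianLaw (fun ω => (X ω, Z ω)) P := by
    have := hXY.map_fun ((ContinuousLinearMap.fst ℝ ℝ ℝ).prod
      (ContinuousLinearMap.snd ℝ ℝ ℝ - (c / a) • ContinuousLinearMap.fst ℝ ℝ ℝ))
    simpa [hZ] using this
  have hcXm : MemLp (fun ω => (c / a) * X ω) 2 P := hXm.const_mul _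
  have hXX : cov[X, X; P] = a := by rw [covariance_self hX.aemeasurable, hVX]
  have hcov : cov[X, Z; P] = 0 := by
    rw [hZ, covariance_fun_sub_right hXm hYm hcXm, covariance_const_mul_right, hc, hXX]
    field_simp; ring
  have hind := hXZ.indepFun_of_covariance_eq_zero hcov
  have hZ0 : P[Z] = 0 := by
    have : P[Z] = P[Y] - (c / a) * P[X] := by
      rw [hZ, integral_sub hXY.snd.integrable (hXY.fst.integrable.const_mul _), integral_const_mul]
    rw [this, hX0, hY0]; simp
  set s := (a * b - c ^ 2) / a with hs
  have hspos : 0 < s := by positivity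
  have hVZ : Var[Z; P] = s := by
    rw [← covariance_self hZmeas.aemeasurable]
    nth_rewrite 1 [hZ]
    rw [covariance_fun_sub_left hYm hcXm hXZ.snd.memLp_two, covariance_const_mul_left, hcov,
      hZ, covariance_fun_sub_right hYm hYm hcXm, covariance_const_mul_right, covariance_comm Y X, hc,
      covariance_self hY.aemeasurable, hVY, hs]
    field_simp; ring
  have hmX := hXZ.fst.map_eq_gaussianReal
  have hmZ := hXZ.snd.map_eq_gaussianReal
  rw [hX0, hVX] at hmX
  rw [hZ0, hVZ] at hmZ
  have hmap := (indepFun_iff_map_prod_eq_prod_map_map hX.aemeasurable hZmeas.aemeasurable).1 hind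
  rw [hmX, hmZ] at hmap
  have hG : Measurable (fun q : ℝ × ℝ => auxF m p q.1 ((c / a) * q.1 + q.2)) :=
    (aux_measF m p).comp (g := fun q : ℝ × ℝ => auxF m p q.1 q.2)
      (f := fun q : ℝ × ℝ => (q.1, (c / a) * q.1 + q.2)) (by fun_prop)
  have hsn : s.toNNReal ≠ 0 := by simpa using hspos
  calc ∫⁻ ω, auxF m p (X ω) (Y ω) ∂P
      = ∫⁻ ω, (fun q : ℝ × ℝ => auxF m p q.1 ((c / a) * q.1 + q.2)) (X ω, Z ω) ∂P := by
        refine lintegral_congr fun ω => ?_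
        simp [hZ]
    _ = ∫⁻ q, auxF m p q.1 ((c / a) * q.1 + q.2)
          ∂((gaussianReal 0 a.toNNReal).prod (gaussianReal 0 s.toNNReal)) := by
        rw [← hmap, lintegral_map hG (hX.prodMk hZmeas)]
    _ = ∫⁻ x, ∫⁻ z, auxF m p x ((c / a) * x + z) ∂(gaussianReal 0 s.toNNReal)
          ∂(gaussianReal 0 a.toNNReal) := lintegral_prod _ hG.aemeasurable
    _ ≤ ∫⁻ x, ENNReal.ofReal ((√(2 * π * s))⁻¹ * (2 / p)) * ENNReal.ofReal (|x| ^ (m - 1))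
          ∂(gaussianReal 0 a.toNNReal) := by
        refine lintegral_mono fun x => ?_
        refine (aux_gauss_le hsn _ (hG.comp (measurable_prodMk_left (x := x)))).trans ?_
        simp only [Function.comp_def]
        rw [lintegral_add_left_eq_self (fun z => auxF m p x z),
          ← ENNReal.ofReal_mul (by positivity), mul_assoc (√(2 * π * s))⁻¹, ENNReal.ofReal_mul (by positivity),
          Real.coe_toNNReal _ hspos.le]
        gcongr
        exact aux_inner hp x
    _ = ENNReal.ofReal ((√(2 * π * s))⁻¹ * (2 / p)) * (ENNReal.ofReal (√a ^ (m - 1)) * auxK m) := by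
        rw [lintegral_const_mul' _ _ ENNReal.ofReal_ne_top, aux_moment m ha]
    _ ≤ _ := by
        rw [← mul_assoc, mul_comm, ← ENNReal.ofReal_mul (by positivity)]
        gcongr
        have hsa : 0 < √a := by positivity
        have hsd : 0 < √(a * b - c ^ 2) := by positivity
        have h2 : 2 ≤ √(2 * π) := by
          apply Real.le_sqrt_of_sq_le
          nlinarith [Real.pi_gt_three]
        rw [Real.sqrt_mul (by positivity), hs, Real.sqrt_div hd.le, Real.rpow_sub_one hsa.ne']
        have : (√(2 * π) * (√(a * b - c ^ 2) / √a))⁻¹ * (2 / p) * (√a ^ m / √a)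
          = (2 / √(2 * π)) * (√a ^ m / √(a * b - c ^ 2) / p) := by
          field_simp
        rw [this]
        apply mul_le_of_le_one_left (by positivity)
        rw [div_le_one (by positivity)]
        exact h2

lemma aux_gl (n : ℕ) : HasGaussianLaw (fun x : Fin n → ℝ => fun i => x i) (stdGaussianPi n) := by
  unfold stdGaussianPi
  refine iIndepFun.hasGaussianLaw (X := fun i (x : Fin n → ℝ) => x i) (fun i => ?_) ?_
  · exact (HasLaw.mk (measurable_pi_apply i).aemeasurable
      (measurePreserving_eval (fun _ : Fin n => gaussianReal 0 1) i).map_eq).hasGaussianLaw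
  · exact iIndepFun_pi (X := fun _ => id) (fun i => aemeasurable_id)

lemma aux_coord_law {n : ℕ} (i : Fin n) : HasLaw (fun x : Fin n → ℝ => x i) (gaussianReal 0 1) (stdGaussianPi n) :=
  ⟨(measurable_pi_apply i).aemeasurable, (measurePreserving_eval (fun _ : Fin n => gaussianReal 0 1) i).map_eq⟩

instance auxProb (n : ℕ) : IsProbabilityMeasure (stdGaussianPi n) := by
  unfold stdGaussianPi; infer_instance

lemma aux_meas {n : ℕ} (M : Fin n → ℝ) : Measurable (linForm M) := by
  unfold linForm; fun_prop

lemma aux_pair {n : ℕ} (M N : Fin n → ℝ) :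
    HasGaussianLaw (fun x => (linForm M x, linForm N x)) (stdGaussianPi n) := by
  have := (aux_gl n).map_fun
    ((∑ i, M i • ContinuousLinearMap.proj (R := ℝ) (φ := fun _ : Fin n => ℝ) i).prod
      (∑ i, N i • ContinuousLinearMap.proj (R := ℝ) (φ := fun _ : Fin n => ℝ) i))
  simpa [linForm, _root_.sum_apply] using this

lemma aux_coord_mem {n : ℕ} (i : Fin n) : MemLp (fun x : Fin n → ℝ => x i) 2 (stdGaussianPi n) :=
  (aux_coord_law i).hasGaussianLaw.memLp_two

lemma aux_mean {n : ℕ} (M : Fin n → ℝ) : ∫ x, linForm M x ∂(stdGaussianPi n) = 0 := by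
  unfold linForm
  rw [integral_finsetSum _ fun i _ => ((aux_coord_mem i).integrable (by norm_num)).const_mul _]
  refine Finset.sum_eq_zero fun i _ => ?_
  rw [integral_const_mul, (aux_coord_law i).integral_eq]
  simp

lemma aux_cov {n : ℕ} (M N : Fin n → ℝ) :
    cov[linForm M, linForm N; stdGaussianPi n] = ∑ i, M i * N i := by
  unfold linForm
  rw [covariance_fun_sum_fun_sum (fun i => (aux_coord_mem i).const_mul _)
    (fun i => (aux_coord_mem i).const_mul _)]
  refine Finset.sum_congr rfl fun i _ => ?_
  rw [Finset.sum_eq_single i]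
  · rw [covariance_const_mul_left, covariance_const_mul_right,
      covariance_self (measurable_pi_apply i).aemeasurable, (aux_coord_law i).variance_eq]
    simp
  · intro j _ hj
    have hind : iIndepFun (fun i (x : Fin n → ℝ) => x i) (stdGaussianPi n) :=
      iIndepFun_pi (X := fun _ => id) (fun i => aemeasurable_id)
    rw [covariance_const_mul_left, covariance_const_mul_right,
      (hind.indepFun hj.symm).covariance_eq_zero (aux_coord_mem i) (aux_coord_mem j)]
    simp
  · simp

lemma aux_var {n : ℕ} (M : Fin n → ℝ) :
    Var[linForm M; stdGaussianPi n] = ∑ i, M i * M i := by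
  rw [← aux_cov, covariance_self (aux_meas M).aemeasurable]

lemma aux_var_pos {n : ℕ} {M : Fin n → ℝ} (hM : M ≠ 0) :
    0 < Var[linForm M; stdGaussianPi n] := by
  rw [aux_var]
  obtain ⟨i, hi⟩ := Function.ne_iff.1 hM
  exact Finset.sum_pos' (fun i _ => mul_self_nonneg _) ⟨i, Finset.mem_univ _, mul_self_pos.2 hi⟩

lemma aux_covar {n : ℕ} (M N : Fin n → ℝ) :
    covar (stdGaussianPi n) (linForm M) (linForm N) = cov[linForm M, linForm N; stdGaussianPi n] := by
  rw [covariance_eq_sub (aux_pair M N).fst.memLp_two (aux_pair M N).snd.memLp_two]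
  rfl

lemma aux_point (m p : ℝ) (x y : ℝ) :
    ENNReal.ofReal ((max |x| |y|) ^ (m - 2) * (min |x| |y| / max |x| |y|) ^ (p - 1))
      ≤ auxF m p x y + auxF m p y x := by
  rcases le_total |y| |x| with h | h
  · rw [max_eq_left h, min_eq_right h]
    refine le_trans (le_of_eq ?_) le_self_add
    simp [auxF, h]
  · rw [max_eq_right h, min_eq_left h]
    refine le_trans (le_of_eq ?_) le_add_self
    simp [auxF, h]

/-- **Lemma (first integral bound).** Let `g ~ N(0, I_n)`, `X₁ = M₁ g`, `Y₁ = M₂ g` with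
`M₁, M₂ ≠ 0` and `|Corr(X₁, Y₁)| < 1`. For every `m > 0` there is `C(m) > 0` such that
for all `p > 1`,
`E[(max(|X₁|,|Y₁|))^(m-2) (min(|X₁|,|Y₁|)/max(|X₁|,|Y₁|))^(p-1)] ≤ C(m, X₁, Y₁)/p`,
where `C(m, X₁, Y₁) = C(m) (max(Var X₁, Var Y₁))^(m/2) / sqrt(Var X₁ · Var Y₁ · (1 - Corr(X₁,Y₁)²))`. -/
theorem integral_bound_ratio_pow
    (m : ℝ) (hm : 0 < m) :
    ∃ C : ℝ, 0 < C ∧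
      ∀ (n : ℕ) (M₁ M₂ : Fin n → ℝ), M₁ ≠ 0 → M₂ ≠ 0 →
        |corr (stdGaussianPi n) (linForm M₁) (linForm M₂)| < 1 →
        ∀ p : ℝ, 1 < p →
          (∫ x, (max |linForm M₁ x| |linForm M₂ x|) ^ (m - 2)
              * (min |linForm M₁ x| |linForm M₂ x|
                  / max |linForm M₁ x| |linForm M₂ x|) ^ (p - 1) ∂(stdGaussianPi n))
            ≤ C * (max (variance (linForm M₁) (stdGaussianPi n))
                    (variance (linForm M₂) (stdGaussianPi n))) ^ (m / 2)
              / Real.sqrt (variance (linForm M₁) (stdGaussianPi n)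
                  * variance (linForm M₂) (stdGaussianPi n)
                  * (1 - corr (stdGaussianPi n) (linForm M₁) (linForm M₂) ^ 2))
              / p := by
  refine ⟨2 * (auxK m).toReal + 1, by positivity, ?_⟩
  intro n M₁ M₂ h1 h2 hcorr p hp
  have ha := aux_var_pos h1
  have hb := aux_var_pos h2
  have hpair := aux_pair M₁ M₂
  have hpair' := aux_pair M₂ M₁
  have e1 := aux_covar M₁ M₂
  set a := Var[linForm M₁; stdGaussianPi n] with hadef
  set b := Var[linForm M₂; stdGaussianPi n] with hbdef
  set c := cov[linForm M₁, linForm M₂; stdGaussianPi n] with hcdef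
  have hcc : a * b * (1 - corr (stdGaussianPi n) (linForm M₁) (linForm M₂) ^ 2) = a * b - c ^ 2 := by
    unfold corr
    rw [e1, ← hadef, ← hbdef, div_pow, Real.sq_sqrt (by positivity)]
    field_simp
  have hd : 0 < a * b - c ^ 2 := by
    rw [← hcc]
    have := (sq_lt_one_iff_abs_lt_one _).2 hcorr
    have : 0 < 1 - corr (stdGaussianPi n) (linForm M₁) (linForm M₂) ^ 2 := by linarith
    positivity
  rw [hcc]
  have A := aux_half (aux_meas M₁) (aux_meas M₂) hpair (aux_mean _) (aux_mean _)
    hadef.symm hbdef.symm hcdef.symm ha hd (m := m) hp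
  have hc' : cov[linForm M₂, linForm M₁; stdGaussianPi n] = c := covariance_comm _ _
  have B := aux_half (aux_meas M₂) (aux_meas M₁) hpair' (aux_mean _) (aux_mean _)
    hbdef.symm hadef.symm hc' hb (by linarith) (m := m) hp
  rw [mul_comm b a] at B
  have hsq : ∀ v : ℝ, 0 ≤ v → v ≤ max a b → √v ^ m ≤ (max a b) ^ (m / 2) := by
    intro v hv hle
    rw [Real.sqrt_eq_rpow, ← Real.rpow_mul hv, show 1 / 2 * m = m / 2 by ring]
    exact Real.rpow_le_rpow hv hle (by positivity)
  set T := (max a b) ^ (m / 2) / √(a * b - c ^ 2) / p with hT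
  have hT0 : 0 ≤ T := by positivity
  have A' : ∫⁻ x, auxF m p (linForm M₁ x) (linForm M₂ x) ∂(stdGaussianPi n)
      ≤ auxK m * ENNReal.ofReal T := by
    refine A.trans ?_
    rw [hT]
    gcongr
    exact hsq a ha.le (le_max_left _ _)
  have B' : ∫⁻ x, auxF m p (linForm M₂ x) (linForm M₁ x) ∂(stdGaussianPi n)
      ≤ auxK m * ENNReal.ofReal T := by
    refine B.trans ?_
    rw [hT]
    gcongr
    exact hsq b hb.le (le_max_right _ _)
  have hK := auxK_lt_top hm
  have m1 := aux_meas M₁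
  have m2 := aux_meas M₂
  have hFm : Measurable fun x => auxF m p (linForm M₁ x) (linForm M₂ x) :=
    (aux_measF m p).comp (m1.prodMk m2)
  rw [integral_eq_lintegral_of_nonneg_ae (Filter.Eventually.of_forall fun x => by positivity)
    (Measurable.aestronglyMeasurable (by fun_prop))]
  have key : ∫⁻ x, ENNReal.ofReal ((max |linForm M₁ x| |linForm M₂ x|) ^ (m - 2)
              * (min |linForm M₁ x| |linForm M₂ x|
                  / max |linForm M₁ x| |linForm M₂ x|) ^ (p - 1)) ∂(stdGaussianPi n)
      ≤ ENNReal.ofReal (2 * (auxK m).toReal * T) := by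
    refine (lintegral_mono fun x => aux_point m p _ _).trans ?_
    rw [lintegral_add_left hFm]
    refine (add_le_add A' B').trans (le_of_eq ?_)
    rw [← two_mul, ENNReal.ofReal_mul (by positivity), ENNReal.ofReal_mul (by positivity),
      ENNReal.ofReal_toReal hK.ne, ENNReal.ofReal_ofNat, mul_assoc]
  refine (ENNReal.toReal_le_of_le_ofReal (by positivity) key).trans ?_
  have : (2 * (auxK m).toReal + 1) * (max a b) ^ (m / 2) / √(a * b - c ^ 2) / p
    = (2 * (auxK m).toReal + 1) * T := by rw [hT]; ring
  rw [this]
  nlinarith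
end
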